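/- Sieve upper bound for Goldbach representations: there exists an absolute constant C > 0 such that for every even integer m ≥ 4 and every real y with 4 ≤ y ≤ m, the number of integers j with 2 ≤ j ≤ y such that both j and m − j are prime is at most C·C(m)·y/(log y)². -/

import Mathlib

open Real

/-- The singular series `C(n) = ∏_{p ∤ n} (1 - 1/(p-1)²) · ∏_{p ∣ n} (1 + 1/(p-1))`,
where both products run over primes. -/
noncomputable def singularSeries (n : ℕ) : ℝ :=
  (∏' p : {p : ℕ // p.Prime ∧ ¬ p ∣ n}, (1 - 1 / ((p : ℕ) - 1 : ℝ) ^ 2)) *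
    ∏ p ∈ n.primeFactors, (1 + 1 / ((p : ℝ) - 1))

namespace BoundingSieve

open ArithmeticFunction Finset
open scoped ArithmeticFunction.Moebius

variable {s : BoundingSieve}

/-- The denominator `∑_{l ∣ P, l ≤ z} g(l)` in the main term of the Selberg sieve. -/
noncomputable def selbergSum (s : BoundingSieve) (z : ℕ) : ℝ :=
  ∑ l ∈ s.prodPrimes.divisors with l ≤ z, s.selbergTerms l

/-- The optimal weights of the Selberg sieve. -/
noncomputable def selbergWeights (s : BoundingSieve) (z d : ℕ) : ℝ :=
  μ d * (s.nu d)⁻¹ * (s.selbergSum z)⁻¹ *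
    ∑ l ∈ s.prodPrimes.divisors with l ≤ z, if d ∣ l then s.selbergTerms l else 0

theorem selbergTerms_pos_of_mem {z l : ℕ} (hl : l ∈ s.prodPrimes.divisors.filter (· ≤ z)) :
    0 < s.selbergTerms l :=
  selbergTerms_pos (Nat.dvd_of_mem_divisors (mem_filter.1 hl).1)

theorem selbergSum_pos {z : ℕ} (hz : 1 ≤ z) : 0 < s.selbergSum z :=
  sum_pos (fun _ hl ↦ selbergTerms_pos_of_mem hl)
    ⟨1, by simp [hz, s.prodPrimes_squarefree.ne_zero]⟩

theorem selbergWeights_one {z : ℕ} (hz : 1 ≤ z) : s.selbergWeights z 1 = 1 := by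
  have h := (selbergSum_pos (s := s) hz).ne'
  simp only [selbergWeights, one_dvd, if_true, s.nu_mult.map_one, moebius_apply_one, Int.cast_one,
    inv_one, one_mul]
  exact inv_mul_cancel₀ h

theorem selbergWeights_eq_zero {z d : ℕ} (hd : z < d) : s.selbergWeights z d = 0 := by
  unfold selbergWeights
  rw [sum_eq_zero, mul_zero]
  intro l hl
  simp only [mem_filter, Nat.mem_divisors] at hl
  rw [if_neg]
  intro h
  have := Nat.le_of_dvd (Nat.pos_of_ne_zero (ne_zero_of_dvd_ne_zero hl.1.2 hl.1.1)) h
  omega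

theorem abs_selbergWeights_le {z d : ℕ} (hz : 1 ≤ z) (hd : d ∣ s.prodPrimes) :
    |s.selbergWeights z d| ≤ (s.nu d)⁻¹ := by
  have hS := selbergSum_pos (s := s) hz
  have hν := nu_pos_of_dvd_prodPrimes hd
  set T := ∑ l ∈ s.prodPrimes.divisors with l ≤ z, if d ∣ l then s.selbergTerms l else 0 with hT
  have hT0 : 0 ≤ T := sum_nonneg fun l hl ↦ by
    split_ifs
    exacts [(selbergTerms_pos_of_mem hl).le, le_rfl]
  have hTS : T ≤ s.selbergSum z := sum_le_sum fun l hl ↦ by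
    split_ifs
    exacts [le_rfl, (selbergTerms_pos_of_mem hl).le]
  have hμ : |(μ d : ℝ)| ≤ 1 := by exact_mod_cast abs_moebius_le_one
  rw [selbergWeights, ← hT, abs_mul, abs_mul, abs_mul, abs_of_nonneg hT0,
    abs_of_pos (inv_pos.2 hν), abs_of_pos (inv_pos.2 hS)]
  calc |(μ d : ℝ)| * (s.nu d)⁻¹ * (s.selbergSum z)⁻¹ * T
      ≤ 1 * (s.nu d)⁻¹ * (s.selbergSum z)⁻¹ * s.selbergSum z := by gcongr
    _ = (s.nu d)⁻¹ := by field_simp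

theorem sum_moebius_divisors_of_dvd {l k : ℕ} (hk : Squarefree k) (hl : l ∣ k) :
    ∑ d ∈ k.divisors with l ∣ d, (μ d : ℝ) = if k = l then (μ l : ℝ) else 0 := by
  obtain ⟨e, rfl⟩ := hl
  have hcop := (Nat.squarefree_mul_iff.1 hk).1
  have h0 : l ≠ 0 := left_ne_zero_of_mul hk.ne_zero
  have he0 : e ≠ 0 := right_ne_zero_of_mul hk.ne_zero
  have h1 : ((l * e).divisors.filter (l ∣ ·)) = e.divisors.image (l * ·) := by
    ext d
    simp only [mem_filter, Nat.mem_divisors, mem_image]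
    constructor
    · rintro ⟨⟨h, -⟩, c, rfl⟩
      exact ⟨c, ⟨(Nat.mul_dvd_mul_iff_left (Nat.pos_of_ne_zero h0)).1 h, he0⟩, rfl⟩
    · rintro ⟨c, ⟨h, -⟩, rfl⟩
      exact ⟨⟨mul_dvd_mul_left l h, hk.ne_zero⟩, dvd_mul_right l c⟩
  rw [h1, sum_image fun a _ b _ h ↦ Nat.eq_of_mul_eq_mul_left (Nat.pos_of_ne_zero h0) h]
  have h2 : ∀ c ∈ e.divisors, (μ (l * c) : ℝ) = μ l * μ c := fun c hc ↦ by
    rw [isMultiplicative_moebius.map_mul_of_coprime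
      (hcop.coprime_dvd_right (Nat.dvd_of_mem_divisors hc)), Int.cast_mul]
  have h3 : ∑ c ∈ e.divisors, (μ c : ℝ) = if e = 1 then 1 else 0 := by
    have := congrArg (fun f : ArithmeticFunction ℤ ↦ (f e : ℝ)) moebius_mul_coe_zeta
    simp only [coe_mul_zeta_apply, one_apply] at this
    exact_mod_cast this
  rw [sum_congr rfl h2, ← mul_sum, h3]
  by_cases he : e = 1
  · simp [he]
  · rw [if_neg he, if_neg, mul_zero]
    intro h
    exact he (Nat.eq_of_mul_eq_mul_left (Nat.pos_of_ne_zero h0) (by rw [h, mul_one]))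

theorem sum_nu_mul_selbergWeights {z l : ℕ} (hl : l ∣ s.prodPrimes) :
    (∑ d ∈ s.prodPrimes.divisors, if l ∣ d then s.nu d * s.selbergWeights z d else 0) =
      if l ≤ z then μ l * s.selbergTerms l * (s.selbergSum z)⁻¹ else 0 := by
  have hP := s.prodPrimes_squarefree.ne_zero
  calc (∑ d ∈ s.prodPrimes.divisors, if l ∣ d then s.nu d * s.selbergWeights z d else 0)
      = ∑ d ∈ s.prodPrimes.divisors, ∑ k ∈ s.prodPrimes.divisors with k ≤ z,
          if l ∣ d ∧ d ∣ k then μ d * (s.selbergSum z)⁻¹ * s.selbergTerms k else 0 := by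
        refine sum_congr rfl fun d hd ↦ ?_
        have hν := nu_ne_zero (Nat.dvd_of_mem_divisors hd)
        by_cases h : l ∣ d
        · simp only [h, if_true, true_and, selbergWeights]
          rw [mul_sum, mul_sum]
          refine sum_congr rfl fun k _ ↦ ?_
          split_ifs
          · field_simp
          · simp
        · simp [h]
    _ = ∑ k ∈ s.prodPrimes.divisors with k ≤ z, (s.selbergSum z)⁻¹ * s.selbergTerms k *
          ∑ d ∈ k.divisors with l ∣ d, (μ d : ℝ) := by
        rw [sum_comm]
        refine sum_congr rfl fun k hk ↦ ?_
        have hk' := Nat.dvd_of_mem_divisors (mem_filter.1 hk).1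
        rw [← Nat.divisors_filter_dvd_of_dvd hP hk', filter_filter, sum_filter, mul_sum]
        refine sum_congr rfl fun d _ ↦ ?_
        by_cases h1 : l ∣ d <;> by_cases h2 : d ∣ k <;> simp [h1, h2]
        ring
    _ = ∑ k ∈ s.prodPrimes.divisors with k ≤ z,
          if k = l then (s.selbergSum z)⁻¹ * s.selbergTerms l * μ l else 0 := by
        refine sum_congr rfl fun k hk ↦ ?_
        have hk' := Nat.dvd_of_mem_divisors (mem_filter.1 hk).1
        by_cases h : l ∣ k
        · rw [sum_moebius_divisors_of_dvd (squarefree_of_dvd_prodPrimes hk') h]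
          split_ifs with h'
          · rw [h']
          · simp
        · rw [if_neg (by rintro rfl; exact h dvd_rfl), sum_eq_zero, mul_zero]
          intro d hd
          simp only [mem_filter, Nat.mem_divisors] at hd
          exact absurd (hd.2.trans hd.1.1) h
    _ = _ := by
        rw [sum_ite_eq']
        simp only [mem_filter, Nat.mem_divisors, hl, hP, ne_eq, not_false_eq_true, and_self,
          true_and]
        split_ifs
        · ring
        · rfl

theorem mainSum_selbergWeights {z : ℕ} (hz : 1 ≤ z) :
    s.mainSum (lambdaSquared (s.selbergWeights z)) = (s.selbergSum z)⁻¹ := by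
  have hS := (selbergSum_pos (s := s) hz).ne'
  rw [mainSum_lambdaSquared_eq_sum_mul_sum_sq]
  calc _ = ∑ l ∈ s.prodPrimes.divisors,
        if l ≤ z then s.selbergTerms l * ((s.selbergSum z)⁻¹) ^ 2 else 0 := by
        refine sum_congr rfl fun l hl ↦ ?_
        have hl' := Nat.dvd_of_mem_divisors hl
        have hg := (selbergTerms_pos hl').ne'
        rw [sum_nu_mul_selbergWeights hl']
        split_ifs
        · have hμ : (μ l : ℝ) ^ 2 = 1 := by
            exact_mod_cast moebius_sq_eq_one_of_squarefree (squarefree_of_dvd_prodPrimes hl')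
          rw [mul_pow, mul_pow, hμ]
          field_simp
        · simp
    _ = _ := by
        rw [← sum_filter, ← sum_mul, ← selbergSum]
        field_simp

end BoundingSieve

namespace GoldbachSieve

open Finset

/-- The number of solutions of `x (m - x) = 0` modulo `d`. -/
noncomputable def rootCount (m d : ℕ) : ℕ := Nat.card {x : ZMod d // x * ((m : ZMod d) - x) = 0}

theorem rootCount_mul (m : ℕ) {a b : ℕ} (h : a.Coprime b) :
    rootCount m (a * b) = rootCount m a * rootCount m b := by
  unfold rootCount
  rw [← Nat.card_prod]
  refine Nat.card_congr ?_
  let e := ZMod.chineseRemainder h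
  refine (e.toEquiv.subtypeEquiv (q := fun x ↦ x.1 * ((m : ZMod a) - x.1) = 0 ∧
    x.2 * ((m : ZMod b) - x.2) = 0) fun x ↦ ?_).trans
    (Equiv.subtypeProdEquivProd (p := fun x : ZMod a ↦ x * ((m : ZMod a) - x) = 0)
      (q := fun x : ZMod b ↦ x * ((m : ZMod b) - x) = 0))
  rw [← e.injective.eq_iff, map_mul, map_sub, map_natCast, map_zero, Prod.ext_iff]
  rfl

theorem rootCount_one (m : ℕ) : rootCount m 1 = 1 := by
  have : ∀ x : ZMod 1, x * ((m : ZMod 1) - x) = 0 := fun x ↦ Subsingleton.elim _ _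
  simp [rootCount, this]

theorem rootCount_pos (m : ℕ) {d : ℕ} (hd : d ≠ 0) : 0 < rootCount m d := by
  have : NeZero d := ⟨hd⟩
  have : Nonempty {x : ZMod d // x * ((m : ZMod d) - x) = 0} := ⟨⟨0, by simp⟩⟩
  exact Nat.card_pos

theorem rootCount_le (m : ℕ) {d : ℕ} (hd : d ≠ 0) : rootCount m d ≤ d := by
  have : NeZero d := ⟨hd⟩
  calc rootCount m d ≤ Nat.card (ZMod d) := Finite.card_subtype_le _
    _ = d := Nat.card_zmod d

theorem rootCount_prime_eq (m : ℕ) {p : ℕ} (hp : p.Prime) :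
    rootCount m p = Set.ncard ({0, (m : ZMod p)} : Set (ZMod p)) := by
  have : Fact p.Prime := ⟨hp⟩
  have h : {x : ZMod p | x * ((m : ZMod p) - x) = 0} = {0, (m : ZMod p)} := by
    ext x
    simp only [Set.mem_ofPred_eq, mul_eq_zero, sub_eq_zero, Set.mem_insert_iff,
      Set.mem_singleton_iff, eq_comm]
  rw [← h]
  rfl

theorem rootCount_prime_of_dvd {m p : ℕ} (hp : p.Prime) (h : p ∣ m) : rootCount m p = 1 := by
  rw [rootCount_prime_eq m hp, (ZMod.natCast_eq_zero_iff m p).2 h]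
  simp

theorem rootCount_prime_of_not_dvd {m p : ℕ} (hp : p.Prime) (h : ¬ p ∣ m) :
    rootCount m p = 2 := by
  rw [rootCount_prime_eq m hp, Set.ncard_pair]
  exact fun h' ↦ h ((ZMod.natCast_eq_zero_iff m p).1 h'.symm)

theorem rootCount_prime_lt {m p : ℕ} (hm : Even m) (hp : p.Prime) : rootCount m p < p := by
  by_cases h : p ∣ m
  · rw [rootCount_prime_of_dvd hp h]
    exact hp.one_lt
  · rw [rootCount_prime_of_not_dvd hp h]
    refine lt_of_le_of_ne hp.two_le ?_
    rintro rfl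
    exact h hm.two_dvd

theorem abs_card_filter_modEq_sub_le (Y v : ℕ) {d : ℕ} (hd : 0 < d) :
    |(#{j ∈ Ioc 0 Y | j ≡ v [MOD d]} : ℝ) - Y / d| ≤ 1 := by
  have h := Nat.Ioc_filter_modEq_card 0 Y hd v
  have hd' : (0 : ℚ) < d := by exact_mod_cast hd
  have hle : ((((0 : ℕ) : ℚ) - v) / d) ≤ ((Y : ℚ) - v) / d := by
    gcongr
    exact Nat.cast_nonneg' Y
  rw [max_eq_left (sub_nonneg.2 (Int.floor_mono hle))] at h
  have h1 := Int.floor_le (((Y : ℚ) - v) / d)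
  have h2 := Int.lt_floor_add_one (((Y : ℚ) - v) / d)
  have h3 := Int.floor_le ((((0 : ℕ) : ℚ) - v) / d)
  have h4 := Int.lt_floor_add_one ((((0 : ℕ) : ℚ) - v) / d)
  have h' : ((#{j ∈ Ioc 0 Y | j ≡ v [MOD d]} : ℤ) : ℚ) = _ := congrArg (Int.cast (R := ℚ)) h
  push_cast at h'
  have key : |((#{j ∈ Ioc 0 Y | j ≡ v [MOD d]} : ℕ) : ℚ) - Y / d| ≤ 1 := by
    rw [h', abs_le]
    have e : ((Y : ℚ) - v) / d - (((0 : ℕ) : ℚ) - v) / d = Y / d := by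
      rw [← sub_div]; simp
    push_cast at *
    constructor <;> linarith
  have := (Rat.cast_le (K := ℝ)).2 key
  push_cast at this
  exact this

theorem abs_card_dvd_sub_le {m Y d : ℕ} (hY : Y ≤ m) (hd : d ≠ 0) :
    |(#{j ∈ Ioc 0 Y | d ∣ j * (m - j)} : ℝ) - (rootCount m d / d : ℝ) * Y| ≤ d := by
  classical
  have : NeZero d := ⟨hd⟩
  set R : Finset (ZMod d) := {x : ZMod d | x * ((m : ZMod d) - x) = 0} with hR
  have hcard : rootCount m d = #R := by
    rw [rootCount, Nat.card_eq_fintype_card, Fintype.card_subtype]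
  have hiff : ∀ j ∈ Ioc 0 Y, d ∣ j * (m - j) ↔ (j : ZMod d) ∈ R := fun j hj ↦ by
    rw [hR, mem_filter, ← ZMod.natCast_eq_zero_iff, Nat.cast_mul,
      Nat.cast_sub ((mem_Ioc.1 hj).2.trans hY)]
    simp
  rw [filter_congr hiff,
    card_eq_sum_card_fiberwise (f := fun j : ℕ ↦ (j : ZMod d)) (t := R)
      (by intro j hj; exact (mem_filter.1 hj).2), hcard]
  have hfib : ∀ x ∈ R,
      #(((Ioc 0 Y).filter fun j : ℕ ↦ (j : ZMod d) ∈ R).filter fun j : ℕ ↦ (j : ZMod d) = x) =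
      #{j ∈ Ioc 0 Y | j ≡ x.val [MOD d]} := fun x hx ↦ by
    rw [filter_filter]
    congr 1
    refine filter_congr fun j _ ↦ ?_
    rw [← ZMod.natCast_eq_natCast_iff, ZMod.natCast_zmod_val]
    exact ⟨fun h ↦ h.2, fun h ↦ ⟨h ▸ hx, h⟩⟩
  rw [sum_congr rfl hfib]
  calc |((∑ x ∈ R, #{j ∈ Ioc 0 Y | j ≡ x.val [MOD d]} : ℕ) : ℝ) - (#R / d : ℝ) * Y|
      = |∑ x ∈ R, ((#{j ∈ Ioc 0 Y | j ≡ x.val [MOD d]} : ℝ) - Y / d)| := by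
        rw [sum_sub_distrib, sum_const, nsmul_eq_mul, Nat.cast_sum]
        congr 2
        ring
    _ ≤ ∑ x ∈ R, (1 : ℝ) := (abs_sum_le_sum_abs _ _).trans
        (sum_le_sum fun x _ ↦ abs_card_filter_modEq_sub_le Y x.val (Nat.pos_of_ne_zero hd))
    _ = #R := by simp
    _ ≤ d := by
        rw [← hcard]
        exact_mod_cast rootCount_le m hd

/-- The density of `{j : d ∣ j (m - j)}` as an arithmetic function of `d`. -/
noncomputable def rootDensity (m : ℕ) : ArithmeticFunction ℝ := ⟨fun d ↦ rootCount m d / d, by simp⟩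

theorem rootDensity_apply (m d : ℕ) : rootDensity m d = rootCount m d / d := rfl

theorem rootDensity_isMultiplicative (m : ℕ) : (rootDensity m).IsMultiplicative := by
  refine ⟨by simp [rootDensity_apply, rootCount_one], fun {a b} h ↦ ?_⟩
  simp only [rootDensity_apply, rootCount_mul m h, Nat.cast_mul]
  rw [mul_div_mul_comm]

theorem rootDensity_pos (m : ℕ) {d : ℕ} (hd : d ≠ 0) : 0 < rootDensity m d := by
  have := rootCount_pos m hd
  rw [rootDensity_apply]
  positivity

theorem rootDensity_prime_lt_one {m p : ℕ} (hm : Even m) (hp : p.Prime) :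
    rootDensity m p < 1 := by
  have := hp.pos
  rw [rootDensity_apply, div_lt_one (by positivity)]
  exact_mod_cast rootCount_prime_lt hm hp

theorem inv_rootDensity_le (m : ℕ) {d : ℕ} (hd : d ≠ 0) : (rootDensity m d)⁻¹ ≤ d := by
  have h : (1 : ℝ) ≤ rootCount m d := by exact_mod_cast rootCount_pos m hd
  rw [rootDensity_apply, inv_div]
  exact div_le_self (Nat.cast_nonneg d) h

/-- The local data of the sieve for the values `j (m - j)`, sifting by the primes up to `z`. -/
noncomputable def goldbachSieve {m : ℕ} (hm : Even m) (z : ℕ) : BoundingSieve where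
  support := ∅
  prodPrimes := primorial z
  prodPrimes_squarefree := squarefree_primorial z
  weights := 0
  weights_nonneg := fun _ ↦ le_rfl
  totalMass := 0
  nu := rootDensity m
  nu_mult := rootDensity_isMultiplicative m
  nu_pos_of_prime := fun _ hp _ ↦ rootDensity_pos m hp.ne_zero
  nu_lt_one_of_prime := fun _ hp _ ↦ rootDensity_prime_lt_one hm hp

open BoundingSieve in
theorem card_sifted_le {m Y z : ℕ} (hm : Even m) (hY : Y ≤ m) (hz : 1 ≤ z) :
    (#{j ∈ Ioc 0 Y | Nat.Coprime (primorial z) (j * (m - j))} : ℝ) ≤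
      Y * ((goldbachSieve hm z).selbergSum z)⁻¹ + (z : ℝ) ^ 6 := by
  set s := goldbachSieve hm z with hs
  set w := s.selbergWeights z with hw
  set D := s.prodPrimes.divisors with hD
  have hP : s.prodPrimes ≠ 0 := primorial_ne_zero z
  have hDne : ∀ d ∈ D, d ≠ 0 := fun d hd ↦ (Nat.pos_of_mem_divisors hd).ne'
  set A : ℕ → ℝ := fun d ↦ #{j ∈ Ioc 0 Y | d ∣ j * (m - j)} with hA
  have h1 : (#{j ∈ Ioc 0 Y | Nat.Coprime (primorial z) (j * (m - j))} : ℝ) ≤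
      ∑ j ∈ Ioc 0 Y, (∑ d ∈ D, if d ∣ j * (m - j) then w d else 0) ^ 2 := by
    rw [card_filter, Nat.cast_sum]
    refine sum_le_sum fun j _ ↦ ?_
    split_ifs with hj
    · rw [sum_eq_single 1]
      · simp [hw, selbergWeights_one hz]
      · intro d hd hd1
        rw [if_neg]
        intro h
        exact hd1 (Nat.dvd_one.1 (hj ▸ Nat.dvd_gcd (Nat.dvd_of_mem_divisors hd) h))
      · intro h
        exact absurd (Nat.one_mem_divisors.2 hP) h
    · simp only [Nat.cast_zero]
      positivity
  have h2 : ∑ j ∈ Ioc 0 Y, (∑ d ∈ D, if d ∣ j * (m - j) then w d else 0) ^ 2 =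
      ∑ d ∈ D, ∑ e ∈ D, w d * w e * A (d.lcm e) := by
    simp_rw [sq, sum_mul_sum]
    rw [sum_comm]
    refine sum_congr rfl fun d _ ↦ ?_
    rw [sum_comm]
    refine sum_congr rfl fun e _ ↦ ?_
    rw [hA]
    simp only [card_filter, Nat.cast_sum, mul_sum]
    refine sum_congr rfl fun j _ ↦ ?_
    by_cases hd : d ∣ j * (m - j) <;> by_cases he : e ∣ j * (m - j) <;>
      simp [Nat.lcm_dvd_iff, hd, he]
  have h3 : ∀ d ∈ D, ∀ e ∈ D, w d * w e * A (d.lcm e) ≤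
      Y * (s.nu d * w d * s.nu e * w e * (s.nu (d.gcd e))⁻¹) +
        (if d ≤ z then (d : ℝ) ^ 2 else 0) * (if e ≤ z then (e : ℝ) ^ 2 else 0) := by
    intro d hd e he
    have hl0 : d.lcm e ≠ 0 := Nat.lcm_ne_zero (hDne d hd) (hDne e he)
    have hg0 : d.gcd e ≠ 0 := Nat.gcd_ne_zero_left (hDne d hd)
    have hν : s.nu (d.lcm e) = s.nu d * s.nu e * (s.nu (d.gcd e))⁻¹ := by
      have := (rootDensity_pos m hg0).ne'
      rw [s.nu_mult.map_lcm this, div_eq_mul_inv]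
    have hAl : |A (d.lcm e) - s.nu (d.lcm e) * Y| ≤ (d : ℝ) * e := by
      refine (abs_card_dvd_sub_le hY hl0).trans ?_
      exact_mod_cast Nat.lcm_le_mul (Nat.pos_of_ne_zero (hDne d hd)) (Nat.pos_of_ne_zero (hDne e he))
    have hwd : ∀ d ∈ D, |w d| * d ≤ if d ≤ z then (d : ℝ) ^ 2 else 0 := by
      intro d hd
      split_ifs with h
      · rw [sq]
        gcongr
        exact (abs_selbergWeights_le hz (Nat.dvd_of_mem_divisors hd)).trans
          (inv_rootDensity_le m (hDne d hd))
      · rw [hw, selbergWeights_eq_zero (not_le.1 h)]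
        simp
    calc w d * w e * A (d.lcm e)
        = Y * (w d * w e * s.nu (d.lcm e)) + w d * w e * (A (d.lcm e) - s.nu (d.lcm e) * Y) := by
          ring
      _ ≤ Y * (w d * w e * s.nu (d.lcm e)) + |w d| * |w e| * (d * e) := by
          refine add_le_add le_rfl ((le_abs_self _).trans ?_)
          rw [abs_mul, abs_mul]
          gcongr
      _ = Y * (s.nu d * w d * s.nu e * w e * (s.nu (d.gcd e))⁻¹) +
            (|w d| * d) * (|w e| * e) := by
          rw [hν]; ring
      _ ≤ _ := by
          gcongr
          · exact hwd d hd
          · exact hwd e he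
  have h4 : ∑ d ∈ D, (if d ≤ z then (d : ℝ) ^ 2 else 0) ≤ (z : ℝ) ^ 3 := by
    rw [← sum_filter]
    calc ∑ d ∈ D with d ≤ z, (d : ℝ) ^ 2 ≤ ∑ d ∈ Ioc 0 z, (d : ℝ) ^ 2 := by
          refine sum_le_sum_of_subset_of_nonneg ?_ fun _ _ _ ↦ by positivity
          intro d hd
          rw [mem_filter] at hd
          exact mem_Ioc.2 ⟨Nat.pos_of_mem_divisors hd.1, hd.2⟩
      _ ≤ ∑ d ∈ Ioc 0 z, (z : ℝ) ^ 2 := by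
          refine sum_le_sum fun d hd ↦ ?_
          have := (mem_Ioc.1 hd).2
          gcongr
      _ = (z : ℝ) ^ 3 := by
          simp
          ring
  have h40 : 0 ≤ ∑ d ∈ D, (if d ≤ z then (d : ℝ) ^ 2 else 0) :=
    sum_nonneg fun d _ ↦ by positivity
  calc _ ≤ ∑ d ∈ D, ∑ e ∈ D, w d * w e * A (d.lcm e) := h1.trans h2.le
    _ ≤ ∑ d ∈ D, ∑ e ∈ D, (Y * (s.nu d * w d * s.nu e * w e * (s.nu (d.gcd e))⁻¹) +
        (if d ≤ z then (d : ℝ) ^ 2 else 0) * (if e ≤ z then (e : ℝ) ^ 2 else 0)) :=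
        sum_le_sum fun d hd ↦ sum_le_sum fun e he ↦ h3 d hd e he
    _ = Y * s.mainSum (lambdaSquared w) + (∑ d ∈ D, (if d ≤ z then (d : ℝ) ^ 2 else 0)) ^ 2 := by
        simp_rw [sum_add_distrib, ← mul_sum]
        rw [mainSum_lambdaSquared_eq_sum_sum_mul, sq, sum_mul]
    _ ≤ Y * (s.selbergSum z)⁻¹ + ((z : ℝ) ^ 3) ^ 2 := by
        rw [hw, mainSum_selbergWeights hz]
        gcongr
    _ = _ := by ring

/-- The completely multiplicative function with the values `rootDensity m p` at primes `p`. -/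
noncomputable def rootDensityHom (m : ℕ) : ℕ →* ℝ where
  toFun n := if n = 0 then 0 else (n.primeFactorsList.map (rootDensity m)).prod
  map_one' := by simp
  map_mul' a b := by
    by_cases ha : a = 0
    · simp [ha]
    by_cases hb : b = 0
    · simp [hb]
    rw [if_neg ha, if_neg hb, if_neg (mul_ne_zero ha hb), ← List.prod_append, ← List.map_append]
    exact ((Nat.perm_primeFactorsList_mul ha hb).map _).prod_eq

theorem rootDensityHom_prime (m : ℕ) {p : ℕ} (hp : p.Prime) :
    rootDensityHom m p = rootDensity m p := by
  simp [rootDensityHom, hp.ne_zero, Nat.primeFactorsList_prime hp]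

theorem rootDensityHom_nonneg (m n : ℕ) : 0 ≤ rootDensityHom m n := by
  change 0 ≤ if n = 0 then (0 : ℝ) else (n.primeFactorsList.map (rootDensity m)).prod
  split_ifs
  · exact le_rfl
  · refine List.prod_nonneg fun x hx ↦ ?_
    obtain ⟨p, hp, rfl⟩ := List.mem_map.1 hx
    exact (rootDensity_pos m (Nat.prime_of_mem_primeFactorsList hp).ne_zero).le

theorem rootDensityHom_of_squarefree (m : ℕ) {l : ℕ} (hl : Squarefree l) :
    rootDensityHom m l = rootDensity m l := by
  conv_lhs => rw [← Nat.prod_primeFactors_of_squarefree hl]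
  conv_rhs => rw [← Nat.prod_primeFactors_of_squarefree hl]
  rw [map_prod, (rootDensity_isMultiplicative m).map_prod_of_subset_primeFactors l _ subset_rfl]
  exact prod_congr rfl fun p hp ↦ rootDensityHom_prime m (Nat.prime_of_mem_primeFactors hp)

theorem card_divisors_coprime_le (m n : ℕ) (hn : n ≠ 0) :
    (#{b ∈ n.divisors | b.Coprime m} : ℝ) ≤ n * rootDensityHom m n := by
  induction n using induction_on_primes with
  | zero => exact absurd rfl hn
  | one => simp [filter_singleton]
  | prime_mul p k hp ih =>
    have hk : k ≠ 0 := right_ne_zero_of_mul hn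
    have hp0 : (p : ℝ) ≠ 0 := by exact_mod_cast hp.ne_zero
    have ih := ih hk
    have hval : ((p * k : ℕ) : ℝ) * rootDensityHom m (p * k) =
        rootCount m p * (k * rootDensityHom m k) := by
      rw [map_mul, rootDensityHom_prime m hp, rootDensity_apply]
      push_cast
      field_simp
    rw [hval]
    have hdvd : ∀ b, b ∣ p * k → b ∣ k ∨ ∃ c, c ∣ k ∧ b = p * c := by
      intro b hb
      by_cases hpb : p ∣ b
      · obtain ⟨c, rfl⟩ := hpb
        exact Or.inr ⟨c, (Nat.mul_dvd_mul_iff_left hp.pos).1 hb, rfl⟩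
      · exact Or.inl (Nat.Coprime.dvd_of_dvd_mul_left
          ((Nat.coprime_comm.1 ((Nat.Prime.coprime_iff_not_dvd hp).2 hpb))) hb)
    by_cases hpm : p ∣ m
    · rw [rootCount_prime_of_dvd hp hpm, Nat.cast_one, one_mul]
      refine le_trans ?_ ih
      norm_cast
      refine card_le_card fun b hb ↦ ?_
      simp only [mem_filter, Nat.mem_divisors] at hb ⊢
      refine ⟨⟨(hdvd b hb.1.1).resolve_right ?_, hk⟩, hb.2⟩
      rintro ⟨c, -, rfl⟩
      exact hp.one_lt.ne' (Nat.eq_one_of_dvd_coprimes hb.2 (dvd_mul_right p c) hpm)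
    · rw [rootCount_prime_of_not_dvd hp hpm]
      have hsub : {b ∈ (p * k).divisors | b.Coprime m} ⊆
          {b ∈ k.divisors | b.Coprime m} ∪ {b ∈ k.divisors | b.Coprime m}.image (p * ·) := by
        intro b hb
        simp only [mem_filter, Nat.mem_divisors, mem_union, mem_image] at hb ⊢
        rcases hdvd b hb.1.1 with h | ⟨c, h, rfl⟩
        · exact Or.inl ⟨⟨h, hk⟩, hb.2⟩
        · exact Or.inr ⟨c, ⟨⟨h, hk⟩, hb.2.coprime_mul_left⟩, rfl⟩
      have h1 := (card_le_card hsub).trans (card_union_le _ _)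
      have h2 := h1.trans (Nat.add_le_add_left card_image_le _)
      have h3 : (#{b ∈ (p * k).divisors | b.Coprime m} : ℝ) ≤
          #{b ∈ k.divisors | b.Coprime m} + #{b ∈ k.divisors | b.Coprime m} := by
        exact_mod_cast h2
      push_cast
      linarith

open BoundingSieve in
theorem sum_rootDensityHom_le_selbergSum {m : ℕ} (hm : Even m) (z : ℕ) :
    ∑ n ∈ Ioc 0 z, rootDensityHom m n ≤ (goldbachSieve hm z).selbergSum z := by
  set s := goldbachSieve hm z with hs
  set rad : ℕ → ℕ := fun n ↦ ∏ p ∈ n.primeFactors, p with hrad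
  have hsq : ∀ n, Squarefree (rad n) := fun n ↦ by
    refine Finset.squarefree_prod_of_pairwise_isCoprime ?_ ?_
    · intro p hp q hq hpq
      exact Nat.coprime_iff_isRelPrime.1 ((Nat.coprime_primes (Nat.prime_of_mem_primeFactors hp)
        (Nat.prime_of_mem_primeFactors hq)).2 hpq)
    · intro p hp
      exact (Nat.prime_of_mem_primeFactors hp).prime.squarefree
  have hmaps : ∀ n ∈ Ioc 0 z, rad n ∈ s.prodPrimes.divisors.filter (· ≤ z) := by
    intro n hn
    have hn' := mem_Ioc.1 hn
    have hle : rad n ≤ z := (Nat.le_of_dvd hn'.1 (Nat.prod_primeFactors_dvd n)).trans hn'.2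
    refine mem_filter.2 ⟨Nat.mem_divisors.2 ⟨?_, primorial_ne_zero z⟩, hle⟩
    exact (hsq n).dvd_primorial.trans (primorial_dvd_primorial hle)
  rw [← sum_fiberwise_of_maps_to hmaps, selbergSum]
  refine sum_le_sum fun l hl ↦ ?_
  have hlsq := squarefree_of_mem_divisors_prodPrimes (mem_filter.1 hl).1
  have hl0 := hlsq.ne_zero
  have hlt : ∀ {p : ℕ}, p.Prime → ‖rootDensityHom m p‖ < 1 := fun {p} hp ↦ by
    rw [Real.norm_of_nonneg (rootDensityHom_nonneg m p), rootDensityHom_prime m hp]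
    exact rootDensity_prime_lt_one hm hp
  have hsum := (EulerProduct.summable_and_hasSum_factoredNumbers_prod_filter_prime_geometric hlt
    l.primeFactors).2
  have hg : s.selbergTerms l = rootDensityHom m l *
      ∏ p ∈ l.primeFactors with p.Prime, (1 - rootDensityHom m p)⁻¹ := by
    rw [selbergTerms_apply, rootDensityHom_of_squarefree m hlsq,
      filter_true_of_mem fun p hp ↦ Nat.prime_of_mem_primeFactors hp]
    congr 1
    refine prod_congr rfl fun p hp ↦ ?_
    rw [rootDensityHom_prime m (Nat.prime_of_mem_primeFactors hp)]
    rfl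
  set T := {n ∈ Ioc 0 z | rad n = l} with hT
  have hTl : ∀ n ∈ T, l * (n / l) = n ∧ n ≠ 0 ∧ n.primeFactors = l.primeFactors := by
    intro n hn
    obtain ⟨hn1, hn2⟩ := mem_filter.1 hn
    refine ⟨Nat.mul_div_cancel' (hn2 ▸ Nat.prod_primeFactors_dvd n),
      (mem_Ioc.1 hn1).1.ne', ?_⟩
    rw [← hn2, hrad]
    exact (Nat.primeFactors_prod fun p hp ↦ Nat.prime_of_mem_primeFactors hp).symm
  have hmem : ∀ n ∈ T, n / l ∈ Nat.factoredNumbers l.primeFactors := by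
    intro n hn
    obtain ⟨h1, h2, h3⟩ := hTl n hn
    have h4 : n / l ≠ 0 := fun h ↦ h2 (by rw [← h1, h, mul_zero])
    refine Nat.mem_factoredNumbers_of_primeFactors_subset h4 ?_
    rw [← h3]
    exact Nat.primeFactors_mono (Nat.div_dvd_of_dvd ⟨_, h1.symm⟩) h2
  rw [hg]
  calc ∑ n ∈ T, rootDensityHom m n
      = rootDensityHom m l * ∑ n ∈ T, rootDensityHom m (n / l) := by
        rw [mul_sum]
        refine sum_congr rfl fun n hn ↦ ?_
        rw [← map_mul, (hTl n hn).1]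
    _ = rootDensityHom m l *
          ∑ k ∈ (T.image (· / l)).subtype (· ∈ Nat.factoredNumbers l.primeFactors),
            rootDensityHom m k := by
        rw [sum_subtype_of_mem (fun k ↦ rootDensityHom m k), sum_image]
        · intro a ha b hb h
          rw [← (hTl a ha).1, ← (hTl b hb).1]
          exact congrArg (l * ·) h
        · intro k hk
          obtain ⟨n, hn, rfl⟩ := mem_image.1 hk
          exact hmem n hn
    _ ≤ _ := by
        refine mul_le_mul_of_nonneg_left ?_ (rootDensityHom_nonneg m l)
        exact sum_le_hasSum _ (fun k _ ↦ rootDensityHom_nonneg m k) hsum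

theorem exists_factored_mul_coprime (m b : ℕ) (hm : m ≠ 0) (hb : b ≠ 0) :
    ∃ k ∈ Nat.factoredNumbers m.primeFactors, ∃ c, c.Coprime m ∧ k * c = b := by
  induction b using induction_on_primes with
  | zero => exact absurd rfl hb
  | one => exact ⟨1, by simp [Nat.mem_factoredNumbers], 1, by simp, by simp⟩
  | prime_mul p a hp ih =>
    obtain ⟨k, hk, c, hc, rfl⟩ := ih (right_ne_zero_of_mul hb)
    by_cases h : p ∣ m
    · refine ⟨p * k, Nat.mul_mem_factoredNumbers ?_ hk, c, hc, by ring⟩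
      refine Nat.mem_factoredNumbers_of_primeFactors_subset hp.ne_zero ?_
      rw [hp.primeFactors, singleton_subset_iff]
      exact Nat.mem_primeFactors.2 ⟨hp, h, hm⟩
    · exact ⟨k, hk, p * c, Nat.Coprime.mul_left ((Nat.Prime.coprime_iff_not_dvd hp).2 h) hc,
        by ring⟩

/-- The Euler product `m / φ(m)`. -/
noncomputable def invEulerFactor (m : ℕ) : ℝ := ∏ p ∈ m.primeFactors, (1 - (p : ℝ)⁻¹)⁻¹

theorem sum_inv_factored_le (m : ℕ) (K : Finset ℕ)
    (hK : ∀ k ∈ K, k ∈ Nat.factoredNumbers m.primeFactors) :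
    ∑ k ∈ K, (k : ℝ)⁻¹ ≤ invEulerFactor m := by
  classical
  let f : ℕ →* ℝ :=
    { toFun := fun n ↦ (n : ℝ)⁻¹, map_one' := by simp, map_mul' := fun a b ↦ by simp [mul_comm] }
  have hlt : ∀ {p : ℕ}, p.Prime → ‖f p‖ < 1 := fun {p} hp ↦ by
    have : (1 : ℝ) < p := by exact_mod_cast hp.one_lt
    change ‖(p : ℝ)⁻¹‖ < 1
    rw [Real.norm_of_nonneg (by positivity)]
    exact inv_lt_one_of_one_lt₀ this
  have hsum := (EulerProduct.summable_and_hasSum_factoredNumbers_prod_filter_prime_geometric hlt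
    m.primeFactors).2
  rw [filter_true_of_mem fun p hp ↦ Nat.prime_of_mem_primeFactors hp] at hsum
  rw [← sum_subtype_of_mem (fun k : ℕ ↦ (k : ℝ)⁻¹) hK]
  refine sum_le_hasSum _ (fun k _ ↦ ?_) hsum
  change 0 ≤ ((k : ℕ) : ℝ)⁻¹
  positivity

theorem sum_inv_le_mul_sum_inv_coprime {m : ℕ} (hm : m ≠ 0) (N : ℕ) :
    ∑ b ∈ Ioc 0 N, (b : ℝ)⁻¹ ≤
      invEulerFactor m * ∑ c ∈ Ioc 0 N with c.Coprime m, (c : ℝ)⁻¹ := by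
  classical
  set K := {k ∈ Ioc 0 N | k ∈ Nat.factoredNumbers m.primeFactors} with hK
  set L := {c ∈ Ioc 0 N | c.Coprime m} with hL
  have hsub : Ioc 0 N ⊆ (K ×ˢ L).image fun x : ℕ × ℕ ↦ x.1 * x.2 := by
    intro b hb
    obtain ⟨hb0, hbN⟩ := mem_Ioc.1 hb
    obtain ⟨k, hk, c, hc, rfl⟩ := exists_factored_mul_coprime m b hm hb0.ne'
    have hk0 := Nat.pos_of_mul_pos_right hb0
    have hc0 := Nat.pos_of_mul_pos_left hb0
    refine mem_image.2 ⟨(k, c), mem_product.2 ⟨mem_filter.2 ⟨mem_Ioc.2 ⟨?_, ?_⟩, hk⟩,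
      mem_filter.2 ⟨mem_Ioc.2 ⟨?_, ?_⟩, hc⟩⟩, rfl⟩
    all_goals nlinarith
  calc ∑ b ∈ Ioc 0 N, (b : ℝ)⁻¹ ≤ ∑ b ∈ (K ×ˢ L).image fun x : ℕ × ℕ ↦ x.1 * x.2, (b : ℝ)⁻¹ :=
        sum_le_sum_of_subset_of_nonneg hsub fun _ _ _ ↦ by positivity
    _ ≤ ∑ x ∈ K ×ˢ L, ((x.1 * x.2 : ℕ) : ℝ)⁻¹ :=
        sum_image_le_of_nonneg (f := fun b : ℕ ↦ (b : ℝ)⁻¹) fun _ _ ↦ by positivity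
    _ = (∑ k ∈ K, (k : ℝ)⁻¹) * ∑ c ∈ L, (c : ℝ)⁻¹ := by
        rw [sum_mul_sum, sum_product]
        simp [mul_comm]
    _ ≤ _ := by
        gcongr
        exact sum_inv_factored_le m K fun k hk ↦ (mem_filter.1 hk).2

theorem sum_inv_mul_sum_inv_coprime_le (m N : ℕ) :
    (∑ a ∈ Ioc 0 N, (a : ℝ)⁻¹) * ∑ c ∈ Ioc 0 N with c.Coprime m, (c : ℝ)⁻¹ ≤
      ∑ n ∈ Ioc 0 (N ^ 2), rootDensityHom m n := by
  classical
  set L := {c ∈ Ioc 0 N | c.Coprime m} with hL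
  have hmaps : ∀ x ∈ Ioc 0 N ×ˢ L, x.1 * x.2 ∈ Ioc 0 (N ^ 2) := by
    intro x hx
    simp only [hL, mem_product, mem_filter, mem_Ioc] at hx ⊢
    refine ⟨Nat.mul_pos hx.1.1 hx.2.1.1, ?_⟩
    rw [sq]
    exact Nat.mul_le_mul hx.1.2 hx.2.1.2
  rw [sum_mul_sum, ← sum_product', ← sum_fiberwise_of_maps_to hmaps]
  refine sum_le_sum fun n hn ↦ ?_
  have hn0 := (mem_Ioc.1 hn).1
  have hn0' : (0 : ℝ) < n := by exact_mod_cast hn0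
  calc ∑ x ∈ Ioc 0 N ×ˢ L with x.1 * x.2 = n, ((x.1 : ℝ)⁻¹ * (x.2 : ℝ)⁻¹)
      = ∑ x ∈ Ioc 0 N ×ˢ L with x.1 * x.2 = n, (n : ℝ)⁻¹ := by
        refine sum_congr rfl fun x hx ↦ ?_
        rw [← (mem_filter.1 hx).2]
        push_cast
        rw [mul_inv]
    _ = #{x ∈ Ioc 0 N ×ˢ L | x.1 * x.2 = n} * (n : ℝ)⁻¹ := by
        rw [sum_const, nsmul_eq_mul]
    _ ≤ #{b ∈ n.divisors | b.Coprime m} * (n : ℝ)⁻¹ := by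
        gcongr
        refine card_le_card_of_injOn Prod.snd ?_ ?_
        · intro x hx
          simp only [hL, coe_filter, mem_product, mem_filter, Set.mem_ofPred_eq] at hx
          simp only [coe_filter, Nat.mem_divisors, Set.mem_ofPred_eq]
          exact ⟨⟨⟨x.1, by rw [← hx.2, mul_comm]⟩, hn0.ne'⟩, hx.1.2.2⟩
        · intro x hx y hy hxy
          simp only [hL, coe_filter, mem_product, mem_filter, mem_Ioc, Set.mem_ofPred_eq] at hx hy
          refine Prod.ext ?_ hxy
          have := hx.2.trans hy.2.symm
          rw [hxy] at this
          exact Nat.eq_of_mul_eq_mul_right hy.1.2.1.1 this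
    _ ≤ (n * rootDensityHom m n) * (n : ℝ)⁻¹ := by
        gcongr
        exact card_divisors_coprime_le m n hn0.ne'
    _ = _ := by field_simp

theorem invEulerFactor_nonneg (m : ℕ) : 0 ≤ invEulerFactor m :=
  prod_nonneg fun p hp ↦ by
    have : (1 : ℝ) ≤ p := by exact_mod_cast (Nat.prime_of_mem_primeFactors hp).one_le
    have := inv_le_one_of_one_le₀ this
    exact inv_nonneg.2 (by linarith)

theorem log_sq_le_mul_selbergSum {m : ℕ} (hm : Even m) (hm0 : m ≠ 0) (N : ℕ) :
    Real.log (N + 1) ^ 2 ≤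
      invEulerFactor m * (goldbachSieve hm (N ^ 2)).selbergSum (N ^ 2) := by
  have hlog : Real.log (N + 1) ≤ ∑ a ∈ Ioc 0 N, (a : ℝ)⁻¹ := by
    have h := log_add_one_le_harmonic N
    rw [harmonic_eq_sum_Icc] at h
    push_cast at h
    exact h
  have h0 : 0 ≤ Real.log ((N : ℝ) + 1) := Real.log_nonneg (by simp)
  have hH : 0 ≤ ∑ a ∈ Ioc 0 N, (a : ℝ)⁻¹ := h0.trans hlog
  calc Real.log (N + 1) ^ 2 ≤ (∑ a ∈ Ioc 0 N, (a : ℝ)⁻¹) ^ 2 := by gcongr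
    _ ≤ (∑ a ∈ Ioc 0 N, (a : ℝ)⁻¹) *
          (invEulerFactor m * ∑ c ∈ Ioc 0 N with c.Coprime m, (c : ℝ)⁻¹) := by
        rw [sq]
        gcongr
        exact sum_inv_le_mul_sum_inv_coprime hm0 N
    _ = invEulerFactor m *
          ((∑ a ∈ Ioc 0 N, (a : ℝ)⁻¹) * ∑ c ∈ Ioc 0 N with c.Coprime m, (c : ℝ)⁻¹) := by ring
    _ ≤ _ := by
        refine mul_le_mul_of_nonneg_left ?_ (invEulerFactor_nonneg m)
        exact (sum_inv_mul_sum_inv_coprime_le m N).trans (sum_rootDensityHom_le_selbergSum hm _)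

theorem half_le_prod_one_sub_inv_sq (N : ℕ) (hN : 2 ≤ N) :
    (1 / 2 : ℝ) + 1 / (2 * N) ≤ ∏ k ∈ Icc 2 N, (1 - 1 / (k : ℝ) ^ 2) := by
  induction N, hN using Nat.le_induction with
  | base => norm_num
  | succ n hn ih =>
    rw [prod_Icc_succ_top (by omega)]
    have hn0 : (0 : ℝ) < n := by positivity
    have h1 : (0 : ℝ) ≤ 1 - 1 / ((n + 1 : ℕ) : ℝ) ^ 2 := by
      rw [sub_nonneg, div_le_one (by positivity)]
      push_cast
      nlinarith
    refine le_trans (le_of_eq ?_) (mul_le_mul_of_nonneg_right ih h1)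
    push_cast
    field_simp
    ring

theorem half_le_prod_primes (t : Finset ℕ) (ht : ∀ p ∈ t, 3 ≤ p) :
    (1 / 2 : ℝ) ≤ ∏ p ∈ t, (1 - 1 / ((p : ℝ) - 1) ^ 2) := by
  have hfac : ∀ k : ℕ, 2 ≤ k → 0 ≤ 1 - 1 / (k : ℝ) ^ 2 ∧ 1 - 1 / (k : ℝ) ^ 2 ≤ 1 := fun k hk ↦ by
    have : (2 : ℝ) ≤ k := by exact_mod_cast hk
    refine ⟨?_, sub_le_self _ (by positivity)⟩
    rw [sub_nonneg, div_le_one (by positivity)]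
    nlinarith
  set N := t.sup id + 2 with hN
  have hsub : (t.image fun p : ℕ ↦ p - 1) ⊆ Icc 2 N := by
    intro k hk
    obtain ⟨p, hp, rfl⟩ := mem_image.1 hk
    have h1 := ht p hp
    have h2 : p ≤ t.sup id := le_sup (f := id) hp
    simp only [mem_Icc]
    omega
  have hinj : Set.InjOn (fun p : ℕ ↦ p - 1) (t : Set ℕ) := fun a ha b hb h ↦ by
    have := ht a ha
    have := ht b hb
    simp only at h
    omega
  calc (1 / 2 : ℝ) ≤ 1 / 2 + 1 / (2 * N) := by simp
    _ ≤ ∏ k ∈ Icc 2 N, (1 - 1 / (k : ℝ) ^ 2) := half_le_prod_one_sub_inv_sq N (by omega)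
    _ ≤ ∏ k ∈ t.image fun p : ℕ ↦ p - 1, (1 - 1 / (k : ℝ) ^ 2) :=
        prod_le_prod_of_subset_of_le_one hsub (fun k hk ↦ (hfac k (mem_Icc.1 hk).1).1)
          fun k hk _ ↦ (hfac k (mem_Icc.1 hk).1).2
    _ = _ := by
        rw [prod_image hinj]
        refine prod_congr rfl fun p hp ↦ ?_
        rw [Nat.cast_sub (by have := ht p hp; omega), Nat.cast_one]

theorem half_le_tprod {m : ℕ} (hm : Even m) :
    (1 / 2 : ℝ) ≤ ∏' p : {p : ℕ // p.Prime ∧ ¬ p ∣ m}, (1 - 1 / ((p : ℕ) - 1 : ℝ) ^ 2) := by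
  by_cases h : Multipliable fun p : {p : ℕ // p.Prime ∧ ¬ p ∣ m} ↦
      (1 - 1 / ((p : ℕ) - 1 : ℝ) ^ 2)
  · refine ge_of_tendsto h.hasProd (Filter.Eventually.of_forall fun t ↦ ?_)
    refine le_of_le_of_eq ?_
      (prod_map t (Function.Embedding.subtype _) fun p : ℕ ↦ (1 - 1 / ((p : ℝ) - 1) ^ 2))
    refine half_le_prod_primes _ fun p hp ↦ ?_
    obtain ⟨q, -, rfl⟩ := mem_map.1 hp
    refine lt_of_le_of_ne q.2.1.two_le fun h2 ↦ q.2.2 ?_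
    exact (congrArg (· ∣ m) h2).mp hm.two_dvd
  · rw [tprod_eq_one_of_not_multipliable h]
    norm_num

theorem prod_one_add_eq_invEulerFactor (m : ℕ) :
    ∏ p ∈ m.primeFactors, (1 + 1 / ((p : ℝ) - 1)) = invEulerFactor m :=
  prod_congr rfl fun p hp ↦ by
    have : (1 : ℝ) < p := by exact_mod_cast (Nat.prime_of_mem_primeFactors hp).one_lt
    have : (p : ℝ) - 1 ≠ 0 := by linarith
    field_simp
    ring

theorem one_le_invEulerFactor (m : ℕ) : 1 ≤ invEulerFactor m := by
  rw [← prod_one_add_eq_invEulerFactor]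
  refine one_le_prod fun p hp ↦ ?_
  have : (1 : ℝ) < p := by exact_mod_cast (Nat.prime_of_mem_primeFactors hp).one_lt
  have : 0 ≤ 1 / ((p : ℝ) - 1) := div_nonneg zero_le_one (by linarith)
  linarith

theorem invEulerFactor_le_two_mul_singularSeries {m : ℕ} (hm : Even m) :
    invEulerFactor m ≤ 2 * singularSeries m := by
  have h1 := half_le_tprod hm
  have h2 := invEulerFactor_nonneg m
  rw [singularSeries, prod_one_add_eq_invEulerFactor]
  nlinarith

theorem card_goldbach_le (m : ℕ) {Y z : ℕ} (hY : Y ≤ m) :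
    #{j ∈ Ioc 0 Y | j.Prime ∧ (m - j).Prime} ≤
      #{j ∈ Ioc 0 Y | Nat.Coprime (primorial z) (j * (m - j))} + 2 * z := by
  have hcop : ∀ {p : ℕ}, p.Prime → z < p → (primorial z).Coprime p := fun hp hz ↦
    Nat.coprime_comm.1 <| hp.coprime_iff_not_dvd.2 fun h ↦ not_lt.2 (hp.dvd_primorial_iff.1 h) hz
  have hsub : {j ∈ Ioc 0 Y | j.Prime ∧ (m - j).Prime} ⊆
      {j ∈ Ioc 0 Y | Nat.Coprime (primorial z) (j * (m - j))} ∪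
        (Ioc 0 z ∪ (Ioc 0 z).image (m - ·)) := by
    intro j hj
    simp only [mem_filter, mem_Ioc, mem_union, mem_image] at hj ⊢
    obtain ⟨hj1, hp, hq⟩ := hj
    by_cases h1 : j ≤ z
    · exact Or.inr (Or.inl ⟨hj1.1, h1⟩)
    by_cases h2 : m - j ≤ z
    · exact Or.inr (Or.inr ⟨m - j, ⟨hq.pos, h2⟩, by omega⟩)
    · exact Or.inl ⟨hj1, Nat.Coprime.mul_right (hcop hp (not_le.1 h1)) (hcop hq (not_le.1 h2))⟩
  have h1 := (card_le_card hsub).trans (card_union_le _ _)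
  have h2 := card_union_le (Ioc 0 z) ((Ioc 0 z).image (m - ·))
  have h3 : #((Ioc 0 z).image (m - ·)) ≤ #(Ioc 0 z) := card_image_le
  simp only [Nat.card_Ioc] at h2 h3
  omega

theorem log_sq_le_sqrt {y : ℝ} (hy : 1 ≤ y) : Real.log y ^ 2 ≤ 16 * y ^ (1 / 2 : ℝ) := by
  have h := Real.log_le_rpow_div (x := y) (ε := 1 / 4) (by linarith) (by norm_num)
  have h0 := Real.log_nonneg hy
  have e : (y ^ (1 / 4 : ℝ)) ^ 2 = y ^ (1 / 2 : ℝ) := by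
    rw [← Real.rpow_natCast, ← Real.rpow_mul (by linarith)]
    norm_num
  calc Real.log y ^ 2 ≤ (y ^ (1 / 4 : ℝ) / (1 / 4)) ^ 2 := by gcongr
    _ = 16 * y ^ (1 / 2 : ℝ) := by rw [← e]; ring

theorem card_goldbach_le_invEulerFactor {m : ℕ} (hm : Even m) (hm0 : m ≠ 0) {y : ℝ} (hy : 4 ≤ y)
    (hym : y ≤ m) :
    (#{j ∈ Ioc 0 ⌊y⌋₊ | j.Prime ∧ (m - j).Prime} : ℝ) ≤
      624 * invEulerFactor m * y / Real.log y ^ 2 := by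
  have hy0 : 0 ≤ y := by linarith
  have hY : ⌊y⌋₊ ≤ m := Nat.floor_le_of_le hym
  have hG := one_le_invEulerFactor m
  have hlogy : 0 < Real.log y := Real.log_pos (by linarith)
  set N := ⌊y ^ (1 / 24 : ℝ)⌋₊ with hN
  have hN1 : 1 ≤ N := Nat.le_floor (by simpa using Real.one_le_rpow (by linarith) (by norm_num))
  have hNle : (N : ℝ) ≤ y ^ (1 / 24 : ℝ) := Nat.floor_le (by positivity)
  have hN1' : (1 : ℝ) ≤ N := by exact_mod_cast hN1
  have hN12 : (N : ℝ) ^ 12 ≤ y ^ (1 / 2 : ℝ) := by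
    calc (N : ℝ) ^ 12 ≤ (y ^ (1 / 24 : ℝ)) ^ 12 := by gcongr
      _ = y ^ (1 / 2 : ℝ) := by
        rw [← Real.rpow_natCast, ← Real.rpow_mul hy0]
        norm_num
  have hN2 : (N : ℝ) ^ 2 ≤ N ^ 12 := pow_le_pow_right₀ hN1' (by norm_num)
  have hlogN : Real.log y / 24 ≤ Real.log (N + 1) := by
    have : y ^ (1 / 24 : ℝ) ≤ N + 1 := (Nat.lt_floor_add_one _).le
    have h := Real.log_le_log (by positivity) this
    rw [Real.log_rpow (by linarith)] at h
    linarith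
  set S := (goldbachSieve hm (N ^ 2)).selbergSum (N ^ 2) with hS
  have hz : 1 ≤ N ^ 2 := Nat.one_le_pow _ _ hN1
  have hS0 : 0 < S := BoundingSieve.selbergSum_pos hz
  have hlow : (Real.log y / 24) ^ 2 ≤ invEulerFactor m * S :=
    le_trans (by gcongr) (log_sq_le_mul_selbergSum hm hm0 N)
  have hSinv : S⁻¹ ≤ 576 * invEulerFactor m / Real.log y ^ 2 := by
    rw [inv_eq_one_div, div_le_div_iff₀ hS0 (by positivity)]
    linarith
  have hcard : (#{j ∈ Ioc 0 ⌊y⌋₊ | j.Prime ∧ (m - j).Prime} : ℝ) ≤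
      #{j ∈ Ioc 0 ⌊y⌋₊ | Nat.Coprime (primorial (N ^ 2)) (j * (m - j))} + 2 * (N : ℝ) ^ 2 := by
    exact_mod_cast card_goldbach_le m (z := N ^ 2) hY
  have hsift := card_sifted_le hm hY hz
  have hfloor : (⌊y⌋₊ : ℝ) ≤ y := Nat.floor_le hy0
  have hsqrt : y ^ (1 / 2 : ℝ) ≤ 16 * y / Real.log y ^ 2 := by
    rw [le_div_iff₀ (by positivity)]
    have e : y ^ (1 / 2 : ℝ) * y ^ (1 / 2 : ℝ) = y := by
      rw [← Real.rpow_add (by linarith)]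
      norm_num
    calc y ^ (1 / 2 : ℝ) * Real.log y ^ 2 ≤ y ^ (1 / 2 : ℝ) * (16 * y ^ (1 / 2 : ℝ)) := by
          gcongr
          exact log_sq_le_sqrt (by linarith)
      _ = 16 * y := by linarith
  have hz6 : (((N ^ 2 : ℕ) : ℝ)) ^ 6 = (N : ℝ) ^ 12 := by push_cast; ring
  rw [← hS, hz6] at hsift
  calc (#{j ∈ Ioc 0 ⌊y⌋₊ | j.Prime ∧ (m - j).Prime} : ℝ)
      ≤ ⌊y⌋₊ * S⁻¹ + 3 * y ^ (1 / 2 : ℝ) := by linarith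
    _ ≤ y * (576 * invEulerFactor m / Real.log y ^ 2) + 3 * (16 * y / Real.log y ^ 2) := by gcongr
    _ = (576 * invEulerFactor m + 48 * 1) * y / Real.log y ^ 2 := by ring
    _ ≤ (576 * invEulerFactor m + 48 * invEulerFactor m) * y / Real.log y ^ 2 := by gcongr
    _ = _ := by ring

end GoldbachSieve

/-- Sieve upper bound: there is an absolute `C > 0` such that for every even `m ≥ 4` and
every real `4 ≤ y ≤ m`, the number of `2 ≤ j ≤ y` with `j` and `m - j` both prime is at
most `C·C(m)·y/(log y)²`. -/
theorem sieve_goldbach_upper_bound :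
    ∃ C : ℝ, 0 < C ∧ ∀ m : ℕ, Even m → 4 ≤ m →
      ∀ y : ℝ, 4 ≤ y → y ≤ m →
        (Set.ncard {j : ℕ | 2 ≤ j ∧ (j : ℝ) ≤ y ∧ Nat.Prime j ∧ Nat.Prime (m - j)} : ℝ) ≤
          C * singularSeries m * y / (Real.log y) ^ 2 := by
  refine ⟨1248, by norm_num, fun m hm hm4 y hy hym ↦ ?_⟩
  have hset : {j : ℕ | 2 ≤ j ∧ (j : ℝ) ≤ y ∧ Nat.Prime j ∧ Nat.Prime (m - j)} =
      (Finset.filter (fun j ↦ j.Prime ∧ (m - j).Prime) (Finset.Ioc 0 ⌊y⌋₊) : Set ℕ) := by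
    ext j
    simp only [Set.mem_ofPred_eq, Finset.coe_filter, Finset.mem_Ioc]
    constructor
    · rintro ⟨h2, hj, hp⟩
      exact ⟨⟨by omega, Nat.le_floor hj⟩, hp⟩
    · rintro ⟨⟨-, hj⟩, hp⟩
      exact ⟨hp.1.two_le, (Nat.le_floor_iff (by linarith)).1 hj, hp⟩
  rw [hset, Set.ncard_coe_finset]
  refine (GoldbachSieve.card_goldbach_le_invEulerFactor hm (by omega) hy hym).trans ?_
  have h := GoldbachSieve.invEulerFactor_le_two_mul_singularSeries hm
  have h' : 624 * GoldbachSieve.invEulerFactor m ≤ 1248 * singularSeries m := by linarith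
  gcongr
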